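/- arXiv:2403.03912 — 2 statements merged into one kernel-verified Lean document; each statement's English description precedes it below -/
import Mathlib

section
/- Let b ≥ 2 be an integer and E a nonempty set of base-b digits. If E ≠ {0}, then K(b,E) < (b/#E)·log(b); whereas for the sole exception E = {0} one has K(b,{0}) > b·log(b). -/
open MeasureTheory Real ENNReal

/-- The digamma function `ψ(x) = d/dx log Γ(x)`. -/
noncomputable def digamma (x : ℝ) : ℝ := deriv (fun y => Real.log (Real.Gamma y)) x

/-- The Kempner sum `K(b,E)`: sum of reciprocals of positive integers whose
base-`b` digits all avoid the excluded set `E`. -/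
noncomputable def kempnerSum (b : ℕ) (E : Finset ℕ) : ℝ :=
  ∑' n : ℕ, if n ≠ 0 ∧ ∀ d ∈ Nat.digits b n, d ∉ E then (n : ℝ)⁻¹ else 0

/-- The measure `μ_{b,E}` on `[0,1)`: the sum, over all finite strings of admissible
digits (digits `< b` not in `E`), of the weighted Dirac mass `b^{-l} δ_{n(X)/b^l}`. -/
noncomputable def kempnerMeasure (b : ℕ) (E : Finset ℕ) : Measure ℝ :=
  Measure.sum (fun X : {l : List ℕ // ∀ d ∈ l, d < b ∧ d ∉ E} =>
    ((b : ℝ≥0∞) ^ X.1.length)⁻¹ •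
      Measure.dirac (((Nat.ofDigits b X.1 : ℕ) : ℝ) / (b : ℝ) ^ X.1.length))

/-- `E₁ = E` if `0 ∉ E`, and `E₁ = (E ∪ {b}) \ {0}` if `0 ∈ E`. -/
def Eone (b : ℕ) (E : Finset ℕ) : Finset ℕ :=
  if 0 ∈ E then insert b (E.erase 0) else E

/-- `ζ(s) = ∑_{k ≥ 1} k⁻ˢ`. -/
noncomputable def zetaVal (s : ℕ) : ℝ := ∑' k : ℕ, (((k : ℝ) + 1) ^ s)⁻¹

/-- `v_m(d) = ∫_{[0,1)} (d - x)^m dμ_{b,E}(x)`. -/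
noncomputable def vMoment (b : ℕ) (E : Finset ℕ) (m : ℕ) (d : ℝ) : ℝ :=
  ∫ x in Set.Ico (0 : ℝ) 1, (d - x) ^ m ∂(kempnerMeasure b E)

/-!
Let `M` be the total mass of `μ = μ_{b,E}` and `T(t) = ∫ (t + x)⁻¹ dμ(x)`. The measure is
self-similar, which gives `M = b / #E` and `T(t) = 1/t + ∑_{a ∉ E} T(b t + a)` (over digits `a`).
Hence the block sums `P(Q) = ∑_{Q ≤ m < bQ} T(m)` satisfy
`P(Q + 1) - P(Q) = ∑_{e ∈ E} T(b Q + e) - 1/Q`. Since `K(b,E)` is the sum of `T(a)` over the nonzero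
admissible digits, and `P(Q) → M log b` because `M / (t + 1) ≤ T(t) ≤ M / t`, summing over `Q` gives
`M log b - K(b,E) = ∑_{n ≥ 0} (∑_{e ∈ E₁} T(b n + e) - 1 / (n + 1))`.

All terms of this series have the same sign. Put `s + 1 = b (n + 1)`, so that
`1 / (n + 1) = #E * M / (s + 1)`. A digit `e ≠ 0` in `E` contributes at least `T(s)`, which exceeds
`M / (s + 1)`. If `0 ∈ E`, the element `b` of `E₁` contributes only `T(s + 1) ≤ M / (s + 1)`, but it
can be paired with a nonzero digit: `T(s) + T(s + 1) > 2 M / (s + 1)`, by comparing `u ↦ 1 / u` with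
its tangent at `u = s + 1` and using that the mean of `μ / M` is less than `1 / 2`. If `E = {0}`
there is no nonzero digit to compensate, and the `n`-th term is `T(s + 1) - M / (s + 1) < 0`.
-/

open Finset Filter Topology

section Stieltjes

/-- The Stieltjes transform `t ↦ ∫ (t + x)⁻¹ dμ(x)` of a measure on the line, with the sign
convention suited to measures on the nonnegative half-line. -/
noncomputable def stieltjesTransform (μ : Measure ℝ) (t : ℝ) : ℝ := ∫ x, (t + x)⁻¹ ∂μ

theorem integrable_of_continuousOn_of_ae_mem {X F : Type*} [TopologicalSpace X] [T2Space X]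
    [TopologicalSpace.PseudoMetrizableSpace X] [MeasurableSpace X]
    [OpensMeasurableSpace X] [NormedAddCommGroup F]
    {ν : Measure X} [IsFiniteMeasureOnCompacts ν] {K : Set X} (hK : IsCompact K)
    (hν : ∀ᵐ x ∂ν, x ∈ K) {f : X → F} (hf : ContinuousOn f K) : Integrable f ν := by
  rw [← Measure.restrict_eq_self_of_ae_mem hν]
  exact hf.integrableOn_compact hK

variable {μ : Measure ℝ} [IsFiniteMeasure μ]

theorem integrable_inv_add (hμ : ∀ᵐ x ∂μ, x ∈ Set.Icc (0 : ℝ) 1) {t : ℝ} (ht : 0 < t) :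
    Integrable (fun x => (t + x)⁻¹) μ :=
  integrable_of_continuousOn_of_ae_mem isCompact_Icc hμ <|
    ContinuousOn.inv₀ (by fun_prop) fun _ hx => (add_pos_of_pos_of_nonneg ht hx.1).ne'

theorem integrable_id_of_ae_mem_Icc (hμ : ∀ᵐ x ∂μ, x ∈ Set.Icc (0 : ℝ) 1) :
    Integrable (fun x => x) μ :=
  integrable_of_continuousOn_of_ae_mem isCompact_Icc hμ continuousOn_id

theorem integral_sub_mul_id (hμ : Integrable (fun x => x) μ) (p q : ℝ) :
    ∫ x, (p - q * x) ∂μ = p * μ.real Set.univ - q * ∫ x, x ∂μ := by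
  rw [integral_sub (integrable_const p) (hμ.const_mul q), integral_const, integral_const_mul,
    smul_eq_mul, mul_comm p]

theorem stieltjesTransform_antitoneOn (hμ : ∀ᵐ x ∂μ, x ∈ Set.Icc (0 : ℝ) 1) :
    AntitoneOn (stieltjesTransform μ) (Set.Ioi 0) := by
  intro s hs t ht hst
  refine integral_mono_ae (integrable_inv_add hμ ht) (integrable_inv_add hμ hs) ?_
  filter_upwards [hμ] with x hx
  exact inv_anti₀ (add_pos_of_pos_of_nonneg hs hx.1) (add_le_add_left hst x)

theorem stieltjesTransform_mem_Icc (hμ : ∀ᵐ x ∂μ, x ∈ Set.Icc (0 : ℝ) 1) {t : ℝ} (ht : 0 < t) :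
    stieltjesTransform μ t ∈
      Set.Icc (μ.real Set.univ * (t + 1)⁻¹) (μ.real Set.univ * t⁻¹) := by
  have hconst (c : ℝ) : ∫ _, c ∂μ = μ.real Set.univ * c := by rw [integral_const, smul_eq_mul]
  have hbounds : ∀ᵐ x ∂μ, (t + x)⁻¹ ∈ Set.Icc (t + 1)⁻¹ t⁻¹ := by
    filter_upwards [hμ] with x hx
    have := hx.1
    exact ⟨inv_anti₀ (by positivity) (by grind), inv_anti₀ ht (by grind)⟩
  rw [← hconst, ← hconst]
  exact ⟨integral_mono_ae (integrable_const _) (integrable_inv_add hμ ht)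
      (hbounds.mono fun _ h => h.1),
    integral_mono_ae (integrable_inv_add hμ ht) (integrable_const _)
      (hbounds.mono fun _ h => h.2)⟩

theorem stieltjesTransform_le_chord (hμ : ∀ᵐ x ∂μ, x ∈ Set.Icc (0 : ℝ) 1) {t : ℝ} (ht : 0 < t) :
    stieltjesTransform μ t ≤
      μ.real Set.univ / t - (∫ x, x ∂μ) / (t * (t + 1)) := by
  have hid := integrable_id_of_ae_mem_Icc hμ
  calc stieltjesTransform μ t ≤ ∫ x, (t⁻¹ - (t * (t + 1))⁻¹ * x) ∂μ := by
        refine integral_mono_ae (integrable_inv_add hμ ht)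
          ((integrable_const _).sub (hid.const_mul _)) ?_
        filter_upwards [hμ] with x hx
        have hgap : t⁻¹ - (t * (t + 1))⁻¹ * x - (t + x)⁻¹ =
            x * (1 - x) / (t * (t + 1) * (t + x)) := by
          have := hx.1
          field_simp
          ring
        refine sub_nonneg.1 (hgap ▸ ?_)
        have := hx.1
        have := sub_nonneg.2 hx.2
        positivity
    _ = _ := by rw [integral_sub_mul_id hid]; ring

theorem tangent_le_stieltjesTransform (hμ : ∀ᵐ x ∂μ, x ∈ Set.Icc (0 : ℝ) 1) {t c : ℝ}
    (ht : 0 < t) (hc : 0 < c) :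
    μ.real Set.univ * (2 / c - t / c ^ 2) - (∫ x, x ∂μ) / c ^ 2 ≤ stieltjesTransform μ t := by
  have hid := integrable_id_of_ae_mem_Icc hμ
  calc _ = ∫ x, ((2 / c - t / c ^ 2) - (c ^ 2)⁻¹ * x) ∂μ := by
        rw [integral_sub_mul_id hid]; ring
    _ ≤ stieltjesTransform μ t := by
        refine integral_mono_ae ((integrable_const _).sub (hid.const_mul _))
          (integrable_inv_add hμ ht) ?_
        filter_upwards [hμ] with x hx
        have htx : 0 < t + x := add_pos_of_pos_of_nonneg ht hx.1
        have hgap : (t + x)⁻¹ - (2 / c - t / c ^ 2 - (c ^ 2)⁻¹ * x) =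
            (t + x - c) ^ 2 / (c ^ 2 * (t + x)) := by
          field_simp
          ring
        exact sub_nonneg.1 (hgap ▸ by positivity)

theorem stieltjesTransform_lt_div (hμ : ∀ᵐ x ∂μ, x ∈ Set.Icc (0 : ℝ) 1)
    (hpos : 0 < ∫ x, x ∂μ) {t : ℝ} (ht : 0 < t) :
    stieltjesTransform μ t < μ.real Set.univ / t :=
  (stieltjesTransform_le_chord hμ ht).trans_lt (sub_lt_self _ (by positivity))

theorem div_add_one_lt_stieltjesTransform (hμ : ∀ᵐ x ∂μ, x ∈ Set.Icc (0 : ℝ) 1)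
    (hmean : ∫ x, x ∂μ < μ.real Set.univ) {t : ℝ} (ht : 0 < t) :
    μ.real Set.univ / (t + 1) < stieltjesTransform μ t := by
  have hgap : μ.real Set.univ * (2 / (t + 1) - t / (t + 1) ^ 2) - (∫ x, x ∂μ) / (t + 1) ^ 2 =
      μ.real Set.univ / (t + 1) + (μ.real Set.univ - ∫ x, x ∂μ) / (t + 1) ^ 2 := by
    field_simp
    ring
  have := sub_pos.2 hmean
  exact (lt_add_of_pos_right _ (by positivity)).trans_le
    (hgap ▸ tangent_le_stieltjesTransform hμ ht (by positivity))

theorem two_mul_div_lt_stieltjesTransform_add (hμ : ∀ᵐ x ∂μ, x ∈ Set.Icc (0 : ℝ) 1)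
    (hmean : 2 * ∫ x, x ∂μ < μ.real Set.univ) {t : ℝ} (ht : 0 < t) :
    2 * (μ.real Set.univ / (t + 1)) < stieltjesTransform μ t + stieltjesTransform μ (t + 1) := by
  have hc : 0 < t + 1 := by positivity
  have hgap : (μ.real Set.univ * (2 / (t + 1) - t / (t + 1) ^ 2) - (∫ x, x ∂μ) / (t + 1) ^ 2) +
      (μ.real Set.univ * (2 / (t + 1) - (t + 1) / (t + 1) ^ 2) - (∫ x, x ∂μ) / (t + 1) ^ 2) =
      2 * (μ.real Set.univ / (t + 1)) +
        (μ.real Set.univ - 2 * ∫ x, x ∂μ) / (t + 1) ^ 2 := by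
    field_simp
    ring
  have := sub_pos.2 hmean
  exact (lt_add_of_pos_right _ (by positivity)).trans_le (hgap ▸ add_le_add
    (tangent_le_stieltjesTransform hμ ht hc) (tangent_le_stieltjesTransform hμ hc hc))

theorem tendsto_sum_Ico_inv_add_one {b : ℕ} (hb : b ≠ 0) :
    Tendsto (fun Q : ℕ => ∑ m ∈ Ico Q (b * Q), ((m : ℝ) + 1)⁻¹) atTop (𝓝 (Real.log b)) := by
  have hbQ : Tendsto (fun Q => b * Q) atTop atTop :=
    tendsto_id.const_mul_atTop' (Nat.pos_of_ne_zero hb)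
  have hlim := ((Real.tendsto_harmonic_sub_log.comp hbQ).sub
    Real.tendsto_harmonic_sub_log).add_const (Real.log b)
  rw [sub_self, zero_add] at hlim
  refine hlim.congr' ?_
  filter_upwards [eventually_ne_atTop 0] with Q hQ
  rw [Finset.sum_Ico_eq_sub _ (Nat.le_mul_of_pos_left Q (Nat.pos_of_ne_zero hb)),
    Function.comp_apply, Nat.cast_mul, Real.log_mul (by exact_mod_cast hb) (by exact_mod_cast hQ)]
  simp only [harmonic, Rat.cast_sum, Rat.cast_inv, Rat.cast_add, Rat.cast_natCast, Rat.cast_one,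
    Nat.cast_add_one]
  ring

theorem tendsto_sum_Ico_stieltjesTransform (hμ : ∀ᵐ x ∂μ, x ∈ Set.Icc (0 : ℝ) 1) {b : ℕ}
    (hb : b ≠ 0) :
    Tendsto (fun Q : ℕ => ∑ m ∈ Ico Q (b * Q), stieltjesTransform μ m) atTop
      (𝓝 (μ.real Set.univ * Real.log b)) := by
  have hlower := (tendsto_sum_Ico_inv_add_one hb).const_mul (μ.real Set.univ)
  have hupper := ((tendsto_sum_Ico_inv_add_one hb).add
    (tendsto_inv_atTop_nhds_zero_nat (𝕜 := ℝ))).const_mul (μ.real Set.univ)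
  rw [add_zero] at hupper
  have hbounds {Q m : ℕ} (hQ : 0 < Q) (hm : m ∈ Ico Q (b * Q)) :=
    stieltjesTransform_mem_Icc hμ (t := m) (Nat.cast_pos.2 (hQ.trans_le (mem_Ico.1 hm).1))
  refine tendsto_of_tendsto_of_tendsto_of_le_of_le' hlower hupper ?_ ?_ <;>
    filter_upwards [eventually_gt_atTop 0] with Q hQ
  · rw [Finset.mul_sum]
    exact sum_le_sum fun m hm => (hbounds hQ hm).1
  have htelescope : ∑ m ∈ Ico Q (b * Q), ((m : ℝ)⁻¹ - ((m : ℝ) + 1)⁻¹) ≤ (Q : ℝ)⁻¹ := by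
    have := Finset.sum_Ico_sub (fun m : ℕ => -(m : ℝ)⁻¹)
      (Nat.le_mul_of_pos_left Q (Nat.pos_of_ne_zero hb))
    simp only [Nat.cast_add_one, neg_sub_neg] at this
    rw [this]
    exact sub_le_self _ (by positivity)
  calc ∑ m ∈ Ico Q (b * Q), stieltjesTransform μ m
      ≤ ∑ m ∈ Ico Q (b * Q), μ.real Set.univ * (m : ℝ)⁻¹ :=
        sum_le_sum fun m hm => (hbounds hQ hm).2
    _ ≤ μ.real Set.univ * (∑ m ∈ Ico Q (b * Q), ((m : ℝ) + 1)⁻¹ + (Q : ℝ)⁻¹) := by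
        rw [sum_sub_distrib, sub_le_iff_le_add'] at htelescope
        rw [← Finset.mul_sum]
        gcongr

theorem tendsto_stieltjesTransform_atTop (hμ : ∀ᵐ x ∂μ, x ∈ Set.Icc (0 : ℝ) 1) :
    Tendsto (stieltjesTransform μ) atTop (𝓝 0) := by
  have hupper := tendsto_inv_atTop_zero.const_mul (μ.real Set.univ)
  rw [mul_zero] at hupper
  refine tendsto_of_tendsto_of_tendsto_of_le_of_le' tendsto_const_nhds hupper ?_ ?_ <;>
    filter_upwards [eventually_gt_atTop 0] with t ht
  · exact (by positivity : 0 ≤ μ.real Set.univ * (t + 1)⁻¹).trans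
      (stieltjesTransform_mem_Icc hμ ht).1
  · exact (stieltjesTransform_mem_Icc hμ ht).2

end Stieltjes

/-- The finite strings of admissible digits, least significant digit first, that index the atoms
of `kempnerMeasure b E`. -/
abbrev KempnerWord (b : ℕ) (E : Finset ℕ) : Type := {l : List ℕ // ∀ d ∈ l, d < b ∧ d ∉ E}

section Words

variable {b : ℕ} {E : Finset ℕ}

/-- Appends the admissible digit `a` to a word, as its most significant digit. -/
def KempnerWord.snoc (X : KempnerWord b E) (a : ↥(range b \ E)) : KempnerWord b E :=
  ⟨X.1 ++ [a.1], by grind⟩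

theorem KempnerWord.snoc_injective :
    Function.Injective fun p : ↥(range b \ E) × KempnerWord b E => p.2.snoc p.1 := by
  rintro ⟨a, X⟩ ⟨a', X'⟩ h
  obtain ⟨hX, ha⟩ := List.append_inj' (congrArg Subtype.val h) rfl
  exact Prod.ext (Subtype.ext (List.singleton_injective ha)) (Subtype.ext hX)

theorem KempnerWord.exists_snoc_eq {X : KempnerWord b E} (hX : X.1 ≠ []) :
    ∃ p : ↥(range b \ E) × KempnerWord b E, p.2.snoc p.1 = X := by
  obtain ⟨l, hl⟩ := X
  obtain ⟨l, a, rfl⟩ := (List.eq_nil_or_concat' l).resolve_left hX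
  exact ⟨⟨⟨a, by grind⟩, ⟨l, by grind⟩⟩, rfl⟩

theorem KempnerWord.tsum_eq_nil_add (f : List ℕ → ℝ≥0∞) :
    ∑' X : KempnerWord b E, f X.1 =
      f [] + ∑ a ∈ range b \ E, ∑' X : KempnerWord b E, f (X.1 ++ [a]) := by
  classical
  let nil : KempnerWord b E := ⟨[], by simp⟩
  let tail (X : KempnerWord b E) : ℝ≥0∞ := if X = nil then 0 else f X.1
  have tail_support : Function.support tail ⊆
      Set.range fun p : ↥(range b \ E) × KempnerWord b E => p.2.snoc p.1 := fun X hX =>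
    exists_snoc_eq fun h => hX (if_pos (Subtype.ext h))
  have tail_snoc (X : KempnerWord b E) (a : ↥(range b \ E)) :
      tail (X.snoc a) = f (X.1 ++ [a.1]) :=
    if_neg fun h => by simpa [snoc, nil] using congrArg Subtype.val h
  calc ∑' X : KempnerWord b E, f X.1
      = f [] + ∑' X, tail X := by
        convert ENNReal.tsum_eq_add_tsum_ite (f := fun X : KempnerWord b E => f X.1) nil
    _ = f [] + ∑' p : ↥(range b \ E) × KempnerWord b E, tail (p.2.snoc p.1) := by
        rw [snoc_injective.tsum_eq tail_support]
    _ = f [] + ∑ a : ↥(range b \ E), ∑' X : KempnerWord b E, f (X.1 ++ [a.1]) := by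
        simp only [tail_snoc, ENNReal.tsum_prod', tsum_fintype]
    _ = f [] + ∑ a ∈ range b \ E, ∑' X : KempnerWord b E, f (X.1 ++ [a]) := by
        rw [Finset.sum_coe_sort _ fun a => ∑' X : KempnerWord b E, f (X.1 ++ [a])]

end Words

section Measure

variable (b : ℕ) (E : Finset ℕ)

theorem kempnerMeasure_eq_dirac_add_sum_map :
    kempnerMeasure b E = Measure.dirac 0 +
      (b : ℝ≥0∞)⁻¹ • ∑ a ∈ range b \ E, (kempnerMeasure b E).map fun x : ℝ => (a + x) / b := by
  ext s hs
  have apply_eq (t : Set ℝ) (ht : MeasurableSet t) :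
      kempnerMeasure b E t = ∑' X : KempnerWord b E, ((b : ℝ≥0∞) ^ X.1.length)⁻¹ *
        t.indicator 1 ((Nat.ofDigits b X.1 : ℕ) / (b : ℝ) ^ X.1.length) := by
    simp only [kempnerMeasure, Measure.sum_apply _ ht, Measure.smul_apply, smul_eq_mul,
      Measure.dirac_apply' _ ht]
  rw [apply_eq s hs, KempnerWord.tsum_eq_nil_add fun l => ((b : ℝ≥0∞) ^ l.length)⁻¹ *
    s.indicator 1 ((Nat.ofDigits b l : ℕ) / (b : ℝ) ^ l.length)]
  simp only [Measure.add_apply, Measure.smul_apply, Measure.finsetSum_apply, smul_eq_mul,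
    Measure.dirac_apply' _ hs, Finset.mul_sum]
  congr 1
  · simp
  refine Finset.sum_congr rfl fun a ha => ?_
  have hb : (b : ℝ) ≠ 0 := by
    have : a < b := by grind
    exact_mod_cast this.ne_bot
  have hmap : Measurable fun x : ℝ => ((a : ℝ) + x) / b := by fun_prop
  rw [Measure.map_apply hmap hs, apply_eq _ (hmap hs), ← ENNReal.tsum_mul_left]
  refine tsum_congr fun X => ?_
  have hpoint : ((Nat.ofDigits b (X.1 ++ [a]) : ℕ) : ℝ) / (b : ℝ) ^ (X.1.length + 1) =
      (a + (Nat.ofDigits b X.1 : ℕ) / (b : ℝ) ^ X.1.length) / b := by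
    rw [Nat.ofDigits_append, Nat.ofDigits_singleton]
    push_cast
    field_simp
    ring
  rw [List.length_append, List.length_singleton, hpoint, ENNReal.inv_pow, ENNReal.inv_pow,
    pow_succ', mul_assoc]
  rfl

theorem kempnerMeasure_univ :
    kempnerMeasure b E Set.univ = (1 - #(range b \ E) * (b : ℝ≥0∞)⁻¹)⁻¹ := by
  set w : ℝ≥0∞ := (b : ℝ≥0∞)⁻¹
  have level (n : ℕ) : ∑' X : KempnerWord b E, (if X.1.length = n then w ^ n else 0) =
      (#(range b \ E) * w) ^ n := by
    induction n with
    | zero =>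
      rw [KempnerWord.tsum_eq_nil_add fun l => if l.length = 0 then w ^ 0 else 0]
      simp
    | succ n ih =>
      rw [KempnerWord.tsum_eq_nil_add fun l => if l.length = n + 1 then w ^ (n + 1) else 0]
      have hterm (X : KempnerWord b E) : (if X.1.length = n then w ^ (n + 1) else 0) =
          w * if X.1.length = n then w ^ n else 0 := by
        rw [mul_ite, mul_zero, pow_succ']
      simp [hterm, ENNReal.tsum_mul_left, ih, pow_succ' (_ * w), mul_assoc, -mul_ite]
  calc kempnerMeasure b E Set.univ
      = ∑' X : KempnerWord b E, w ^ X.1.length := by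
        simp [kempnerMeasure, Measure.sum_apply, ENNReal.inv_pow, w]
    _ = ∑' (n : ℕ) (X : KempnerWord b E), if X.1.length = n then w ^ n else 0 := by
        rw [ENNReal.tsum_comm]
        simp
    _ = (1 - #(range b \ E) * w)⁻¹ := by
        simp only [level, ENNReal.tsum_geometric]

variable {b E}

theorem card_range_sdiff (hEb : ∀ d ∈ E, d < b) : (#(range b \ E) : ℝ) = b - #E := by
  have hsub : E ⊆ range b := fun d hd => mem_range.2 (hEb d hd)
  rw [cast_card_sdiff hsub, card_range]

theorem isFiniteMeasure_kempnerMeasure (hE : ∃ d ∈ E, d < b) :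
    IsFiniteMeasure (kempnerMeasure b E) := by
  obtain ⟨d, hdE, hdb⟩ := hE
  have hcard : #(range b \ E) < b := by
    conv_rhs => rw [← card_range b]
    exact card_lt_card ((ssubset_iff_of_subset sdiff_subset).2 ⟨d, by simpa, by simp [hdE]⟩)
  refine ⟨?_⟩
  rw [kempnerMeasure_univ, ENNReal.inv_lt_top, tsub_pos_iff_lt, ← div_eq_mul_inv]
  exact ENNReal.div_lt_of_lt_mul (by simpa using hcard)

theorem ae_kempnerMeasure_mem_Icc (hb : 1 < b) :
    ∀ᵐ x ∂kempnerMeasure b E, x ∈ Set.Icc (0 : ℝ) 1 := by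
  refine (Measure.ae_sum_iff' measurableSet_Icc).2 fun X => Measure.ae_smul_measure ?_ _
  refine (ae_dirac_iff measurableSet_Icc).2 ⟨by positivity, ?_⟩
  rw [div_le_one (by positivity)]
  exact_mod_cast (Nat.ofDigits_lt_base_pow_length hb fun d hd => (X.2 d hd).1).le

theorem integral_kempnerMeasure (hb : b ≠ 0) {f : ℝ → ℝ} (hf : Measurable f)
    (hint : Integrable f (kempnerMeasure b E)) :
    ∫ x, f x ∂kempnerMeasure b E =
      f 0 + (b : ℝ)⁻¹ * ∑ a ∈ range b \ E, ∫ x, f ((a + x) / b) ∂kempnerMeasure b E := by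
  have hself := kempnerMeasure_eq_dirac_add_sum_map b E
  have hmap (a : ℕ) : Measurable fun x : ℝ => (a + x) / b := by fun_prop
  have hint_parts := hint
  rw [hself, integrable_add_measure, integrable_smul_measure (by simp) (by simpa),
    integrable_finsetSum_measure] at hint_parts
  conv_lhs => rw [hself]
  rw [integral_add_measure hint_parts.1
      ((integrable_finsetSum_measure.2 hint_parts.2).smul_measure (by simpa)),
    integral_dirac, integral_smul_measure, integral_finsetSum_measure hint_parts.2]
  simp [integral_map (hmap _).aemeasurable hf.aestronglyMeasurable]

variable [IsFiniteMeasure (kempnerMeasure b E)]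

theorem kempnerMeasure_real_univ_mul_card (hb : b ≠ 0) (hEb : ∀ d ∈ E, d < b) :
    (kempnerMeasure b E).real Set.univ * #E = b := by
  have hmass := integral_kempnerMeasure (E := E) hb (f := fun _ => 1) measurable_const
    (integrable_const _)
  simp only [integral_const, smul_eq_mul, mul_one, sum_const, nsmul_eq_mul,
    card_range_sdiff hEb] at hmass
  field_simp at hmass
  linarith

theorem kempnerMeasure_real_univ_pos (hb : b ≠ 0) (hEb : ∀ d ∈ E, d < b) :
    0 < (kempnerMeasure b E).real Set.univ :=
  pos_of_mul_pos_left ((kempnerMeasure_real_univ_mul_card hb hEb).symm ▸ by positivity)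
    (Nat.cast_nonneg #E)

theorem integral_id_kempnerMeasure (hb : 1 < b) (hEb : ∀ d ∈ E, d < b) :
    ((b : ℝ) * (b - 1) + #E) * ∫ x, x ∂kempnerMeasure b E =
      (∑ a ∈ range b \ E, (a : ℝ)) * (kempnerMeasure b E).real Set.univ := by
  have hid := integrable_id_of_ae_mem_Icc (ae_kempnerMeasure_mem_Icc (E := E) hb)
  have hdigit (a : ℕ) : ∫ x, ((a : ℝ) + x) / b ∂kempnerMeasure b E =
      (a * (kempnerMeasure b E).real Set.univ + ∫ x, x ∂kempnerMeasure b E) / b := by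
    rw [integral_div, integral_add (integrable_const _) hid, integral_const, smul_eq_mul, mul_comm]
  have hmean := integral_kempnerMeasure (by lia) measurable_id' hid
  simp only [hdigit, ← Finset.sum_div, sum_add_distrib, ← Finset.sum_mul, sum_const, nsmul_eq_mul,
    card_range_sdiff hEb] at hmean
  field_simp at hmean
  linarith

theorem two_mul_integral_id_kempnerMeasure_lt (hb : 1 < b) (hEb : ∀ d ∈ E, d < b) :
    2 * ∫ x, x ∂kempnerMeasure b E < (kempnerMeasure b E).real Set.univ := by
  have hsum : (∑ a ∈ range b \ E, (a : ℝ)) * 2 ≤ b * (b - 1) := by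
    have hsubset : ∑ a ∈ range b \ E, a ≤ ∑ a ∈ range b, a := sum_le_sum_of_subset sdiff_subset
    have hgauss := Finset.sum_range_id_mul_two b
    rw [← Nat.cast_sum, ← Nat.cast_pred (by lia)]
    exact_mod_cast hgauss ▸ Nat.mul_le_mul_right 2 hsubset
  have hmass := kempnerMeasure_real_univ_mul_card (by lia) hEb
  have hmass_pos := kempnerMeasure_real_univ_pos (b := b) (by lia) hEb
  have hb1 : (0 : ℝ) < b - 1 := sub_pos.2 (by exact_mod_cast hb)
  refine lt_of_mul_lt_mul_left ?_ (by positivity : 0 ≤ (b : ℝ) * (b - 1) + #E)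
  calc ((b : ℝ) * (b - 1) + #E) * (2 * ∫ x, x ∂kempnerMeasure b E)
      = (∑ a ∈ range b \ E, (a : ℝ)) * 2 * (kempnerMeasure b E).real Set.univ := by
        rw [mul_left_comm, integral_id_kempnerMeasure hb hEb]
        ring
    _ ≤ b * (b - 1) * (kempnerMeasure b E).real Set.univ := by gcongr
    _ < b * (b - 1) * (kempnerMeasure b E).real Set.univ + b :=
        lt_add_of_pos_right _ (by positivity)
    _ = (b * (b - 1) + #E) * (kempnerMeasure b E).real Set.univ := by
        rw [add_mul, mul_comm (#E : ℝ), hmass]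

theorem integral_id_kempnerMeasure_pos (hb : 1 < b) (hEb : ∀ d ∈ E, d < b)
    (hA : ∃ a ∈ range b \ E, a ≠ 0) : 0 < ∫ x, x ∂kempnerMeasure b E := by
  obtain ⟨a, ha, ha0⟩ := hA
  have hsum : 0 < ∑ a ∈ range b \ E, (a : ℝ) :=
    sum_pos' (fun _ _ => Nat.cast_nonneg _) ⟨a, ha, by positivity⟩
  have hb1 : (0 : ℝ) < b - 1 := sub_pos.2 (by exact_mod_cast hb)
  refine pos_of_mul_pos_right ?_ (by positivity : 0 ≤ (b : ℝ) * (b - 1) + #E)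
  rw [integral_id_kempnerMeasure hb hEb]
  exact mul_pos hsum (kempnerMeasure_real_univ_pos (by lia) hEb)

end Measure

/-- The Stieltjes transform of `μ_{b,E}`; at a positive integer `n` it sums the reciprocals of the
integers whose base-`b` expansion is that of `n` followed by admissible digits. -/
noncomputable abbrev kempnerStieltjes (b : ℕ) (E : Finset ℕ) : ℝ → ℝ :=
  stieltjesTransform (kempnerMeasure b E)

section KempnerSum

variable {b : ℕ} {E : Finset ℕ}

theorem digits_ofDigits_append_singleton (hb : 1 < b) (X : KempnerWord b E)
    (a : ↥((range b \ E).erase 0)) :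
    Nat.digits b (Nat.ofDigits b (X.1 ++ [a.1])) = X.1 ++ [a.1] := by
  refine Nat.digits_ofDigits b hb _ ?_ ?_ <;> grind

theorem ofDigits_append_singleton_injective (hb : 1 < b) :
    Function.Injective fun p : ↥((range b \ E).erase 0) × KempnerWord b E =>
      Nat.ofDigits b (p.2.1 ++ [p.1.1]) := by
  rintro ⟨a, X⟩ ⟨a', X'⟩ h
  have hdigits := congrArg (Nat.digits b) h
  simp only [digits_ofDigits_append_singleton hb] at hdigits
  obtain ⟨hX, ha⟩ := List.append_inj' hdigits rfl
  exact Prod.ext (Subtype.ext (List.singleton_injective ha)) (Subtype.ext hX)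

theorem exists_ofDigits_append_singleton_eq (hb : 1 < b) {n : ℕ} (hn : n ≠ 0)
    (hnE : ∀ d ∈ Nat.digits b n, d ∉ E) :
    ∃ (X : KempnerWord b E) (a : ↥((range b \ E).erase 0)),
      Nat.ofDigits b (X.1 ++ [a.1]) = n := by
  have hne : Nat.digits b n ≠ [] := Nat.digits_ne_nil_iff_ne_zero.2 hn
  have hlead := Nat.getLast_digit_ne_zero b hn
  have hdigit {d : ℕ} (hd : d ∈ Nat.digits b n) : d < b ∧ d ∉ E :=
    ⟨Nat.digits_lt_base hb hd, hnE d hd⟩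
  have hlead_digit := hdigit (List.getLast_mem hne)
  refine ⟨⟨(Nat.digits b n).dropLast, fun d hd => hdigit (List.mem_of_mem_dropLast hd)⟩,
    ⟨(Nat.digits b n).getLast hne, by grind⟩, ?_⟩
  rw [List.dropLast_append_getLast hne, Nat.ofDigits_digits]

variable [IsFiniteMeasure (kempnerMeasure b E)]

theorem kempnerStieltjes_eq_inv_add_sum (hb : 1 < b) {t : ℝ} (ht : 0 < t) :
    kempnerStieltjes b E t =
      t⁻¹ + ∑ a ∈ range b \ E, kempnerStieltjes b E (b * t + a) := by
  have hdigit (a : ℕ) (x : ℝ) : (t + (a + x) / b)⁻¹ = b * (b * t + a + x)⁻¹ := by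
    rw [← div_eq_mul_inv, ← inv_div]
    field_simp
    ring
  rw [kempnerStieltjes, stieltjesTransform, integral_kempnerMeasure (by lia) (by fun_prop)
    (integrable_inv_add (ae_kempnerMeasure_mem_Icc hb) ht)]
  simp only [hdigit, integral_const_mul, ← Finset.mul_sum, add_zero]
  rw [inv_mul_cancel_left₀ (by positivity)]
  rfl

theorem hasSum_kempnerStieltjes (hb : 1 < b) {n : ℕ} (hn : n ≠ 0) :
    HasSum (fun X : KempnerWord b E =>
      ((Nat.ofDigits b X.1 + b ^ X.1.length * n : ℕ) : ℝ)⁻¹) (kempnerStieltjes b E n) := by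
  have hint := integrable_inv_add (ae_kempnerMeasure_mem_Icc (E := E) hb)
    (t := n) (by positivity)
  refine (hasSum_integral_measure hint).congr_fun fun X => ?_
  have hmass : (((b : ℝ≥0∞) ^ X.1.length)⁻¹).toReal = ((b : ℝ) ^ X.1.length)⁻¹ := by simp
  rw [integral_smul_measure, integral_dirac, hmass, smul_eq_mul, ← mul_inv]
  push_cast
  field_simp
  ring

theorem kempnerSum_eq_sum_kempnerStieltjes (hb : 1 < b) :
    kempnerSum b E = ∑ a ∈ (range b \ E).erase 0, kempnerStieltjes b E a := by
  let expansion (p : ↥((range b \ E).erase 0) × KempnerWord b E) : ℕ :=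
    Nat.ofDigits b (p.2.1 ++ [p.1.1])
  have digits_expansion (p) : Nat.digits b (expansion p) = p.2.1 ++ [p.1.1] :=
    digits_ofDigits_append_singleton hb p.2 p.1
  have hfiber (a : ↥((range b \ E).erase 0)) :
      HasSum (fun X : KempnerWord b E => (expansion (a, X) : ℝ)⁻¹) (kempnerStieltjes b E a) := by
    simpa only [expansion, Nat.ofDigits_append, Nat.ofDigits_singleton] using
      hasSum_kempnerStieltjes hb (mem_erase.1 a.2).1
  have hsummable : Summable fun p => (expansion p : ℝ)⁻¹ :=
    (summable_prod_of_nonneg fun _ => by positivity).2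
      ⟨fun a => (hfiber a).summable, .of_finite⟩
  have hterm (p) : (if expansion p ≠ 0 ∧ ∀ d ∈ Nat.digits b (expansion p), d ∉ E
      then (expansion p : ℝ)⁻¹ else 0) = (expansion p : ℝ)⁻¹ := by
    rw [digits_expansion, if_pos]
    refine ⟨fun h => ?_, by grind⟩
    simpa [h] using digits_expansion p
  calc kempnerSum b E = ∑' p, (expansion p : ℝ)⁻¹ := by
        refine ((ofDigits_append_singleton_injective hb).tsum_eq fun n hn => ?_).symm.trans
          (tsum_congr hterm)
        obtain ⟨hn, hnE⟩ := of_not_not fun h => hn (if_neg h)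
        obtain ⟨X, a, h⟩ := exists_ofDigits_append_singleton_eq hb hn hnE
        exact ⟨(a, X), h⟩
    _ = ∑ a : ↥((range b \ E).erase 0), kempnerStieltjes b E a := by
        rw [hsummable.tsum_prod, tsum_fintype]
        simp only [(hfiber _).tsum_eq]
    _ = ∑ a ∈ (range b \ E).erase 0, kempnerStieltjes b E a :=
        Finset.sum_coe_sort _ fun a : ℕ => kempnerStieltjes b E a

end KempnerSum

section Defect

/-- The `n`-th term of the series expansion of `(b / #E) log b - K(b,E)`. -/
noncomputable def kempnerDefect (b : ℕ) (E : Finset ℕ) (n : ℕ) : ℝ :=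
  ∑ e ∈ Eone b E, kempnerStieltjes b E (b * n + e) - ((n : ℝ) + 1)⁻¹

variable {b : ℕ} {E : Finset ℕ}

theorem sum_Eone (hb : b ∉ E) (f : ℕ → ℝ) :
    ∑ e ∈ Eone b E, f e = ∑ e ∈ E.erase 0, f e + if 0 ∈ E then f b else 0 := by
  unfold Eone
  split_ifs with h0
  · rw [sum_insert (by grind), add_comm]
  · rw [erase_eq_of_notMem h0, add_zero]

theorem pos_of_tendsto_sum_range {f : ℕ → ℝ} {l : ℝ} (hf : ∀ n, 0 < f n)
    (hl : Tendsto (fun Q => ∑ n ∈ range Q, f n) atTop (𝓝 l)) : 0 < l := by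
  have hsum := (hasSum_iff_tendsto_nat_of_nonneg (fun n => (hf n).le) l).2 hl
  exact hsum.tsum_eq ▸ hsum.summable.tsum_pos (fun n => (hf n).le) 0 (hf 0)

variable [IsFiniteMeasure (kempnerMeasure b E)]

theorem sum_Ico_kempnerStieltjes_add_one (hb : 1 < b) (hEb : ∀ d ∈ E, d < b) {Q : ℕ}
    (hQ : 0 < Q) :
    ∑ m ∈ Ico (Q + 1) (b * (Q + 1)), kempnerStieltjes b E m =
      ∑ m ∈ Ico Q (b * Q), kempnerStieltjes b E m +
        ∑ e ∈ E, kempnerStieltjes b E (b * Q + e) - (Q : ℝ)⁻¹ := by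
  have hblock : ∑ m ∈ Ico Q (b * (Q + 1)), kempnerStieltjes b E m =
      ∑ m ∈ Ico Q (b * Q), kempnerStieltjes b E m +
        ∑ d ∈ range b, kempnerStieltjes b E (b * Q + d) := by
    rw [← sum_Ico_consecutive _ (Nat.le_mul_of_pos_left Q (by lia))
      (Nat.mul_le_mul_left b (Nat.le_add_right Q 1)), Finset.sum_Ico_eq_sum_range _ (b * Q),
      mul_add_one, Nat.add_sub_cancel_left]
    simp only [Nat.cast_add, Nat.cast_mul]
  have hhead := sum_eq_sum_Ico_succ_bot (f := fun m : ℕ => kempnerStieltjes b E m)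
    (by nlinarith : Q < b * (Q + 1))
  have hsplit := sum_sdiff (f := fun d : ℕ => kempnerStieltjes b E (b * Q + d))
    (fun d hd => mem_range.2 (hEb d hd) : E ⊆ range b)
  have hrec := kempnerStieltjes_eq_inv_add_sum (E := E) hb (t := Q) (by positivity)
  linarith

theorem sum_range_kempnerDefect (hb : 1 < b) (hEb : ∀ d ∈ E, d < b) {Q : ℕ} (hQ : 0 < Q) :
    ∑ n ∈ range Q, kempnerDefect b E n =
      ∑ m ∈ Ico Q (b * Q), kempnerStieltjes b E m - kempnerSum b E +
        (if 0 ∈ E then kempnerStieltjes b E (b * Q) else 0) - (Q : ℝ)⁻¹ := by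
  have hbE : b ∉ E := fun h => (hEb b h).false
  induction Q, hQ using Nat.le_induction with
  | base =>
    have hunion : Ico 1 (b * 1) = (range b \ E).erase 0 ∪ E.erase 0 := by grind
    rw [sum_range_one, kempnerDefect, sum_Eone hbE, kempnerSum_eq_sum_kempnerStieltjes hb, hunion,
      sum_union (by grind [disjoint_left])]
    simp
  | succ Q hQ ih =>
    have hzero : ∑ e ∈ E, kempnerStieltjes b E (b * Q + e) =
        ∑ e ∈ E.erase 0, kempnerStieltjes b E (b * Q + e) +
          if 0 ∈ E then kempnerStieltjes b E (b * Q) else 0 := by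
      split_ifs with h0
      · rw [← sum_erase_add _ _ h0, Nat.cast_zero, add_zero]
      · rw [erase_eq_of_notMem h0, add_zero]
    rw [sum_range_succ, ih, sum_Ico_kempnerStieltjes_add_one hb hEb hQ, hzero, kempnerDefect,
      sum_Eone hbE]
    push_cast
    rw [mul_add_one]
    ring

theorem tendsto_sum_range_kempnerDefect (hb : 1 < b) (hEb : ∀ d ∈ E, d < b) :
    Tendsto (fun Q => ∑ n ∈ range Q, kempnerDefect b E n) atTop
      (𝓝 ((kempnerMeasure b E).real Set.univ * Real.log b - kempnerSum b E)) := by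
  have hsupp := ae_kempnerMeasure_mem_Icc (E := E) hb
  have hlast : Tendsto (fun Q : ℕ => if 0 ∈ E then kempnerStieltjes b E (b * Q) else 0) atTop
      (𝓝 0) := by
    split_ifs
    · exact (tendsto_stieltjesTransform_atTop hsupp).comp
        (tendsto_natCast_atTop_atTop.const_mul_atTop (by positivity))
    · exact tendsto_const_nhds
  have hlim := (((tendsto_sum_Ico_stieltjesTransform hsupp (b := b) (by lia)).sub_const
    (kempnerSum b E)).add hlast).sub tendsto_inv_atTop_nhds_zero_nat
  rw [add_zero, sub_zero] at hlim
  refine hlim.congr' ?_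
  filter_upwards [eventually_gt_atTop 0] with Q hQ
  exact (sum_range_kempnerDefect hb hEb hQ).symm

theorem card_mul_kempnerStieltjes_le_sum (hb : 1 < b) (hEb : ∀ d ∈ E, d < b) {n s : ℝ}
    (hn : 0 ≤ n) (hs : s + 1 = b * (n + 1)) :
    #(E.erase 0) * kempnerStieltjes b E s ≤
      ∑ e ∈ E.erase 0, kempnerStieltjes b E (b * n + e) := by
  rw [← nsmul_eq_mul]
  refine card_nsmul_le_sum _ _ _ fun e he => ?_
  have he_pos : (0 : ℝ) < e := by exact_mod_cast (by grind : 0 < e)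
  have he_lt : (e : ℝ) + 1 ≤ b := by exact_mod_cast hEb e (mem_of_mem_erase he)
  have hleft : 0 < (b : ℝ) * n + e := by positivity
  have hle : (b : ℝ) * n + e ≤ s := by linarith
  exact stieltjesTransform_antitoneOn (ae_kempnerMeasure_mem_Icc hb) hleft (hleft.trans_le hle) hle

theorem kempnerDefect_pos (hb : 1 < b) (hEb : ∀ d ∈ E, d < b) (hE : (E.erase 0).Nonempty)
    (n : ℕ) : 0 < kempnerDefect b E n := by
  have hsupp := ae_kempnerMeasure_mem_Icc (E := E) hb
  have hmass := kempnerMeasure_real_univ_mul_card (by lia) hEb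
  have hmean := two_mul_integral_id_kempnerMeasure_lt hb hEb
  have hmass_pos := kempnerMeasure_real_univ_pos (by lia) hEb
  set M := (kempnerMeasure b E).real Set.univ
  obtain ⟨s, hs⟩ : ∃ s : ℝ, s + 1 = b * (n + 1) := ⟨_, sub_add_cancel _ 1⟩
  have hs_pos : 0 < s := by
    have : 1 < (b : ℝ) * (n + 1) := one_lt_mul_of_lt_of_le (by exact_mod_cast hb) (by simp)
    linarith
  have hinv : ((n : ℝ) + 1)⁻¹ = #E * (M / (s + 1)) := by
    rw [← mul_div_assoc, mul_comm (#E : ℝ), hmass, hs, div_mul_cancel_left₀ (by positivity)]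
  have hlower := card_mul_kempnerStieltjes_le_sum hb hEb n.cast_nonneg hs
  have hone := div_add_one_lt_stieltjesTransform hsupp (by linarith) hs_pos
  have hlast : (b : ℝ) * n + b = s + 1 := by rw [hs, mul_add_one]
  have hcard : (1 : ℝ) ≤ #(E.erase 0) := by exact_mod_cast hE.card_pos
  rw [kempnerDefect, sum_Eone (fun h => (hEb b h).false) fun e => kempnerStieltjes b E (b * n + e),
    hinv, sub_pos, hlast]
  split_ifs with h0
  · have htwo := two_mul_div_lt_stieltjesTransform_add hsupp hmean hs_pos
    rw [← card_erase_add_one h0, Nat.cast_add_one]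
    have hrest := mul_le_mul_of_nonneg_left hone.le (sub_nonneg.2 hcard)
    linarith
  · rw [erase_eq_of_notMem h0] at hlower hcard ⊢
    rw [add_zero]
    exact (mul_lt_mul_of_pos_left hone (by positivity)).trans_le hlower

theorem kempnerDefect_singleton_zero_neg (hb : 1 < b) [IsFiniteMeasure (kempnerMeasure b {0})]
    (n : ℕ) : kempnerDefect b {0} n < 0 := by
  have hEb : ∀ d ∈ ({0} : Finset ℕ), d < b := by grind
  have hmass := kempnerMeasure_real_univ_mul_card (by lia) hEb
  have hmean := integral_id_kempnerMeasure_pos hb hEb ⟨1, by grind, one_ne_zero⟩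
  have hlt := stieltjesTransform_lt_div (ae_kempnerMeasure_mem_Icc hb) hmean
    (by positivity : 0 < (b : ℝ) * (n + 1))
  rw [card_singleton, Nat.cast_one, mul_one] at hmass
  rw [hmass, div_mul_cancel_left₀ (by positivity)] at hlt
  rw [kempnerDefect, sum_Eone (by grind)]
  simpa [mul_add_one] using hlt

end Defect

theorem kempner_lt_blogb (b : ℕ) (hb : 2 ≤ b) (E : Finset ℕ)
    (hE : E.Nonempty) (hEsub : ∀ d ∈ E, d < b) :
    (E ≠ {0} → kempnerSum b E < ((b : ℝ) / E.card) * Real.log b) ∧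
    kempnerSum b {0} > (b : ℝ) * Real.log b := by
  constructor
  · intro hE0
    have := isFiniteMeasure_kempnerMeasure (hE.imp fun d hd => ⟨hd, hEsub d hd⟩)
    have hmass := kempnerMeasure_real_univ_mul_card (by lia) hEsub
    have hnonzero : (E.erase 0).Nonempty :=
      nonempty_iff_ne_empty.2 (by simp [erase_eq_empty_iff, hE.ne_empty, hE0])
    have hgap := pos_of_tendsto_sum_range (kempnerDefect_pos hb hEsub hnonzero)
      (tendsto_sum_range_kempnerDefect hb hEsub)
    rw [← eq_div_of_mul_eq (by simpa using hE.ne_empty) hmass]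
    exact sub_pos.1 hgap
  · have hzero : ∀ d ∈ ({0} : Finset ℕ), d < b := by grind
    have := isFiniteMeasure_kempnerMeasure (b := b) ⟨0, mem_singleton_self 0, by lia⟩
    have hmass := kempnerMeasure_real_univ_mul_card (by lia) hzero
    rw [card_singleton, Nat.cast_one, mul_one] at hmass
    have hlim := (tendsto_sum_range_kempnerDefect hb hzero).neg
    simp only [← sum_neg_distrib, hmass, neg_sub] at hlim
    exact sub_pos.1 (pos_of_tendsto_sum_range
      (fun n => neg_pos.2 (kempnerDefect_singleton_zero_neg hb n)) hlim)
end

section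
/- For every integer b ≥ 2 one has b·log(b) < K(b,{0}) < b·log(b) + ψ(1 + 1/b) − ψ(1) < b·log(b) + ζ(2)/b. -/
open MeasureTheory Real ENNReal

/-!
Group the zero-free integers by their number of digits, and sort those with `l + 1` digits by their
leading digit `d`: they are the `n + b ^ l * d`, with `n` zero-free of length `l` and `0 < d < b`.
With `x = n / b ^ l`, their reciprocals are `b ^ (-l) / (x + d)`, and Gauss's multiplication formula
at `1 + x / b` turns the sum over `d` of `1 / (x + d)` into
`log b - ψ(1 + x) + (1 / b) ∑_{0 ≤ d < b} ψ(1 + (x + d) / b)`.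
Summed over `n` and then over `l`, the terms with `d ≠ 0` telescope against `ψ(1 + x)` and leave
`-ψ(1)`. The logarithms add up to `b log b`, and the terms with `d = 0` are a weighted average, of
total weight `1`, of the numbers `ψ(1 + n / b ^ (l + 1))`. As `ψ` is strictly increasing and
`0 ≤ n / b ^ (l + 1) < 1 / b`, this average lies strictly between `ψ(1)` and `ψ(1 + 1 / b)`.
-/

open Filter Topology Finset

section Digamma

lemma differentiableAt_log_Gamma {x : ℝ} (hx : 0 < x) :
    DifferentiableAt ℝ (fun y => Real.log (Real.Gamma y)) x :=
  (Real.differentiableAt_Gamma fun m => by linarith [m.cast_nonneg (α := ℝ)]).log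
    (Real.Gamma_pos_of_pos hx).ne'

lemma log_Gamma_add_one {x : ℝ} (hx : 0 < x) :
    Real.log (Real.Gamma (x + 1)) = Real.log (Real.Gamma x) + Real.log x := by
  rw [Real.Gamma_add_one hx.ne', Real.log_mul hx.ne' (Real.Gamma_pos_of_pos hx).ne', add_comm]

lemma digamma_add_one {x : ℝ} (hx : 0 < x) : digamma (x + 1) = digamma x + x⁻¹ := by
  have h : (fun y => Real.log (Real.Gamma (y + 1))) =ᶠ[𝓝 x]
      fun y => Real.log (Real.Gamma y) + Real.log y :=
    (eventually_gt_nhds hx).mono fun y hy => log_Gamma_add_one hy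
  rw [digamma, ← deriv_comp_add_const (fun y => Real.log (Real.Gamma y)), h.deriv_eq,
    deriv_fun_add (differentiableAt_log_Gamma hx) (Real.differentiableAt_log hx.ne'),
    Real.deriv_log, digamma]

lemma digamma_add_nat {x : ℝ} (hx : 0 < x) (n : ℕ) :
    digamma (x + n) = digamma x + ∑ k ∈ range n, (x + k)⁻¹ := by
  induction n with
  | zero => simp
  | succ n ih =>
    rw [sum_range_succ, ← add_assoc, ← ih, ← digamma_add_one (by positivity), Nat.cast_succ,
      add_assoc]

lemma strictMonoOn_digamma : StrictMonoOn digamma (Set.Ioi 0) := by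
  have hmono : MonotoneOn digamma (Set.Ioi 0) :=
    Real.convexOn_log_Gamma.monotoneOn_deriv fun x hx => differentiableAt_log_Gamma hx
  intro x (hx : 0 < x) y (hy : 0 < y) hxy
  have hshift : digamma (x + 1) ≤ digamma (y + 1) :=
    hmono (add_pos hx one_pos) (add_pos hy one_pos) (by gcongr)
  rw [digamma_add_one hx, digamma_add_one hy] at hshift
  linarith [inv_strictAnti₀ hx hxy]

lemma slope_log_Gamma_add_one {x : ℝ} (hx : 0 < x) :
    slope (Real.log ∘ Real.Gamma) x (x + 1) = Real.log x := by
  simp [slope_def_field, log_Gamma_add_one hx]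

lemma digamma_le_log {x : ℝ} (hx : 0 < x) : digamma x ≤ Real.log x := by
  rw [← slope_log_Gamma_add_one hx]
  exact Real.convexOn_log_Gamma.deriv_le_slope hx (add_pos hx one_pos) (lt_add_one x)
    (differentiableAt_log_Gamma hx)

lemma log_le_digamma_add_one {x : ℝ} (hx : 0 < x) : Real.log x ≤ digamma (x + 1) := by
  rw [← slope_log_Gamma_add_one hx]
  exact Real.convexOn_log_Gamma.slope_le_deriv hx (add_pos hx one_pos) (lt_add_one x)
    (differentiableAt_log_Gamma (add_pos hx one_pos))

lemma tendsto_digamma_sub_log :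
    Tendsto (fun x => digamma x - Real.log x) atTop (𝓝 0) := by
  have hlower : Tendsto (fun x : ℝ => -x⁻¹) atTop (𝓝 0) := by
    simpa using (tendsto_inv_atTop_zero (𝕜 := ℝ)).neg
  refine tendsto_of_tendsto_of_tendsto_of_le_of_le' hlower tendsto_const_nhds ?_ ?_
  · filter_upwards [eventually_gt_atTop 0] with x hx
    linarith [log_le_digamma_add_one hx, digamma_add_one hx]
  · filter_upwards [eventually_gt_atTop 0] with x hx
    exact sub_nonpos.2 (digamma_le_log hx)

lemma tendsto_digamma_add_sub_log (a : ℝ) :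
    Tendsto (fun x => digamma (x + a) - Real.log x) atTop (𝓝 0) := by
  have h := (tendsto_digamma_sub_log.comp (tendsto_atTop_add_const_right _ a tendsto_id)).add
    (Real.tendsto_log_comp_add_sub_log a)
  simpa using h

lemma hasSum_inv_sub_inv_digamma {x y : ℝ} (hx : 0 < x) (hxy : x ≤ y) :
    HasSum (fun k : ℕ => (x + k)⁻¹ - (y + k)⁻¹) (digamma y - digamma x) := by
  rw [hasSum_iff_tendsto_nat_of_nonneg fun k => sub_nonneg.2 (by gcongr)]
  have htail (a : ℝ) : Tendsto (fun n : ℕ => digamma (a + n) - Real.log n) atTop (𝓝 0) := by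
    simpa only [add_comm a] using!
      (tendsto_digamma_add_sub_log a).comp tendsto_natCast_atTop_atTop
  have h := ((htail x).sub (htail y)).const_add (digamma y - digamma x)
  rw [sub_zero, add_zero] at h
  refine h.congr fun n => ?_
  rw [digamma_add_nat hx, digamma_add_nat (hx.trans_le hxy), sum_sub_distrib]
  ring

lemma digamma_one_add_sub_digamma_one_lt {x : ℝ} (hx : 0 < x) :
    digamma (1 + x) - digamma 1 < zetaVal 2 * x := by
  have hzeta : Summable fun k : ℕ => (((k : ℝ) + 1) ^ 2)⁻¹ := by
    simpa using (summable_nat_add_iff 1).2 (Real.summable_nat_pow_inv.2 one_lt_two)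
  have hterm (k : ℕ) : (1 + (k : ℝ))⁻¹ - (1 + x + k)⁻¹ < (((k : ℝ) + 1) ^ 2)⁻¹ * x := by
    calc (1 + (k : ℝ))⁻¹ - (1 + x + k)⁻¹ = x / ((k + 1) * (k + 1 + x)) := by field_simp; ring
      _ < x / (k + 1) ^ 2 := by
        rw [sq]
        exact div_lt_div_of_pos_left hx (by positivity)
          (mul_lt_mul_of_pos_left (lt_add_of_pos_right _ hx) (by positivity))
      _ = (((k : ℝ) + 1) ^ 2)⁻¹ * x := div_eq_inv_mul _ _
  exact hasSum_lt (fun k => (hterm k).le) (hterm 0)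
    (hasSum_inv_sub_inv_digamma one_pos (le_add_of_nonneg_right hx.le))
    (hzeta.hasSum.mul_right x)

lemma tendsto_digamma_natCast_mul_sub_mean {n : ℕ} (hn : n ≠ 0) :
    Tendsto (fun x : ℝ => digamma (n * x) - (∑ k ∈ range n, digamma (x + k / n)) / n) atTop
      (𝓝 (Real.log n)) := by
  have hn' : (0 : ℝ) < n := by positivity
  have hmul := tendsto_digamma_sub_log.comp (tendsto_id.const_mul_atTop hn')
  have hmean := (tendsto_finsetSum (range n) fun k _ =>
    tendsto_digamma_add_sub_log ((k : ℝ) / n)).div_const (n : ℝ)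
  have h := (hmul.sub hmean).add_const (Real.log n)
  rw [sum_const_zero, zero_div, sub_zero, zero_add] at h
  refine h.congr' ?_
  filter_upwards [eventually_gt_atTop 0] with x hx
  simp only [Function.comp_apply, id_eq, sum_sub_distrib, sum_const, card_range, nsmul_eq_mul,
    Real.log_mul hn'.ne' hx.ne']
  field_simp
  ring

lemma digamma_natCast_mul_sub_mean_add_one {n : ℕ} (hn : n ≠ 0) {x : ℝ} (hx : 0 < x) :
    digamma (n * (x + 1)) - (∑ k ∈ range n, digamma (x + 1 + k / n)) / n =
      digamma (n * x) - (∑ k ∈ range n, digamma (x + k / n)) / n := by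
  have hshift (k : ℕ) : digamma (x + 1 + k / n) = digamma (x + k / n) + n * (n * x + k)⁻¹ := by
    rw [add_right_comm, digamma_add_one (by positivity)]
    congr 1
    field_simp
  rw [mul_add_one, digamma_add_nat (by positivity), sum_congr rfl fun k _ => hshift k,
    sum_add_distrib, ← mul_sum]
  field_simp
  ring

/- Gauss's multiplication formula: the difference of the two non-constant terms is `1`-periodic and
tends to `log n` at infinity. -/
lemma digamma_natCast_mul {n : ℕ} (hn : n ≠ 0) {x : ℝ} (hx : 0 < x) :
    digamma (n * x) = Real.log n + (∑ k ∈ range n, digamma (x + k / n)) / n := by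
  have hperiodic (N : ℕ) :
      digamma (n * (x + N)) - (∑ k ∈ range n, digamma (x + N + k / n)) / n =
        digamma (n * x) - (∑ k ∈ range n, digamma (x + k / n)) / n := by
    induction N with
    | zero => simp
    | succ N ih =>
      rw [← ih, Nat.cast_succ, ← add_assoc, digamma_natCast_mul_sub_mean_add_one hn (by positivity)]
  have hlim := (tendsto_digamma_natCast_mul_sub_mean hn).comp
    (tendsto_atTop_add_const_left _ x tendsto_natCast_atTop_atTop)
  have h := tendsto_nhds_unique (hlim.congr hperiodic) tendsto_const_nhds
  linarith

lemma sum_inv_add_eq_log_sub_digamma {n : ℕ} (hn : n ≠ 0) {x : ℝ} (hx : -1 < x) :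
    ∑ d ∈ range n \ {0}, (x + d)⁻¹ =
      Real.log n - digamma (1 + x) + (∑ d ∈ range n, digamma (1 + (x + d) / n)) / n := by
  obtain ⟨m, rfl⟩ := Nat.exists_eq_succ_of_ne_zero hn
  have hm : (0 : ℝ) < (m + 1 : ℕ) := by positivity
  have hmul : ((m + 1 : ℕ) : ℝ) * (1 + x / (m + 1 : ℕ)) = 1 + x + m := by
    field_simp
    push_cast
    ring
  have hpos : 0 < 1 + x / (m + 1 : ℕ) :=
    pos_of_mul_pos_right (hmul ▸ by linarith [m.cast_nonneg (α := ℝ)]) hm.le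
  have hgauss := digamma_natCast_mul hn hpos
  rw [hmul, digamma_add_nat (by linarith)] at hgauss
  have hsum : ∑ d ∈ range (m + 1) \ {0}, (x + d)⁻¹ = ∑ k ∈ range m, (1 + x + k)⁻¹ := by
    rw [sdiff_singleton_eq_erase, sum_erase_eq_sub (mem_range.2 m.succ_pos), sum_range_succ',
      add_sub_cancel_right]
    exact sum_congr rfl fun k _ => by rw [Nat.cast_succ, add_comm 1 x, add_right_comm, add_assoc]
  simp only [add_div, ← add_assoc]
  linarith

end Digamma

section Blocks

/-- The numbers with exactly `l` base-`b` digits, none of them in `E`: the blocks into which the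
Kempner sum is split. Since `0` has no digits it forms the block `l = 0`, where it is harmless
because `0⁻¹ = 0`. -/
def kempnerBlock (b : ℕ) (E : Finset ℕ) (l : ℕ) : Finset ℕ :=
  {n ∈ range (b ^ l) | (Nat.digits b n).length = l ∧ ∀ d ∈ Nat.digits b n, d ∉ E}

variable {b : ℕ} {E : Finset ℕ} {l : ℕ}

lemma kempnerBlock_zero : kempnerBlock b E 0 = {0} := by
  ext n
  simp +contextual [kempnerBlock]

lemma mem_kempnerBlock (hb : 1 < b) {n : ℕ} :
    n ∈ kempnerBlock b E l ↔ (Nat.digits b n).length = l ∧ ∀ d ∈ Nat.digits b n, d ∉ E := by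
  rw [kempnerBlock, mem_filter, mem_range, ← Nat.digits_length_le_iff hb]
  exact and_iff_right_of_imp fun h => h.1.le

lemma sum_range_pow_eq_sum_kempnerBlock {M : Type*} [AddCommMonoid M] (hb : 1 < b) (E : Finset ℕ)
    (f : ℕ → M) (L : ℕ) :
    (∑ n ∈ range (b ^ L), if ∀ d ∈ Nat.digits b n, d ∉ E then f n else 0) =
      ∑ l ∈ range (L + 1), ∑ n ∈ kempnerBlock b E l, f n := by
  have hmaps : ∀ n ∈ {n ∈ range (b ^ L) | ∀ d ∈ Nat.digits b n, d ∉ E},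
      (Nat.digits b n).length ∈ range (L + 1) := by
    simp +contextual [Nat.digits_length_le_iff hb]
  rw [← sum_filter, ← sum_fiberwise_of_maps_to hmaps]
  refine sum_congr rfl fun l hl => sum_congr ?_ fun _ _ => rfl
  ext n
  simp only [mem_filter, mem_range, mem_kempnerBlock hb, ← Nat.digits_length_le_iff hb] at hl ⊢
  grind

lemma kempnerSum_eq_of_hasSum (hb : 1 < b) {s : ℝ}
    (hs : HasSum (fun l => ∑ n ∈ kempnerBlock b E l, (n : ℝ)⁻¹) s) : kempnerSum b E = s := by
  set f : ℕ → ℝ := fun n => if ∀ d ∈ Nat.digits b n, d ∉ E then (n : ℝ)⁻¹ else 0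
  have hf (n : ℕ) : 0 ≤ f n := by positivity
  have hkempner : kempnerSum b E = ∑' n, f n :=
    tsum_congr fun n => by rcases eq_or_ne n 0 with rfl | hn <;> simp [f, *]
  have hmono : Monotone fun N => ∑ n ∈ range N, f n := fun _ _ h =>
    sum_le_sum_of_subset_of_nonneg (range_subset_range.2 h) fun n _ _ => hf n
  have hpow : Tendsto (fun L => ∑ n ∈ range (b ^ L), f n) atTop (𝓝 s) :=
    ((tendsto_add_atTop_iff_nat 1).2 hs.tendsto_sum_nat).congr fun L =>
      (sum_range_pow_eq_sum_kempnerBlock hb E _ L).symm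
  rw [hkempner, ((hasSum_iff_tendsto_nat_of_nonneg hf s).2
    ((tendsto_iff_tendsto_subseq_of_monotone hmono
      (tendsto_pow_atTop_atTop_of_one_lt hb)).2 hpow)).tsum_eq]

lemma mem_kempnerBlock_iff_ofDigits (hb : 1 < b) (hE : 0 ∈ E) {n : ℕ} :
    n ∈ kempnerBlock b E l ↔
      ∃ X : List ℕ, X.length = l ∧ (∀ d ∈ X, d ∈ range b \ E) ∧ Nat.ofDigits b X = n := by
  rw [mem_kempnerBlock hb]
  constructor
  · rintro ⟨hlen, hadm⟩
    exact ⟨Nat.digits b n, hlen,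
      fun d hd => mem_sdiff.2 ⟨mem_range.2 (Nat.digits_lt_base hb hd), hadm d hd⟩,
      Nat.ofDigits_digits b n⟩
  · rintro ⟨X, hlen, hadm, rfl⟩
    simp only [Finset.mem_sdiff, Finset.mem_range] at hadm
    rw [Nat.digits_ofDigits b hb X (fun d hd => (hadm d hd).1)
      fun hX h => (hadm _ (X.getLast_mem hX)).2 (h ▸ hE)]
    exact ⟨hlen, fun d hd => (hadm d hd).2⟩

lemma sum_kempnerBlock_succ {M : Type*} [AddCommMonoid M] (hb : 1 < b) (hE : 0 ∈ E) (f : ℕ → M) :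
    ∑ n ∈ kempnerBlock b E (l + 1), f n =
      ∑ n ∈ kempnerBlock b E l, ∑ d ∈ range b \ E, f (n + b ^ l * d) := by
  rw [← sum_product']
  symm
  refine sum_nbij (fun p => p.1 + b ^ l * p.2) ?_ ?_ ?_ fun _ _ => rfl
  · rintro ⟨n, d⟩ hp
    obtain ⟨hn, hd⟩ := mem_product.1 hp
    obtain ⟨X, rfl, hadm, rfl⟩ := (mem_kempnerBlock_iff_ofDigits hb hE).1 hn
    refine (mem_kempnerBlock_iff_ofDigits hb hE).2 ⟨X ++ [d], by simp, ?_, ?_⟩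
    · intro e he
      rcases List.mem_append.1 he with he | he
      · exact hadm e he
      · exact List.mem_singleton.1 he ▸ hd
    · simp [Nat.ofDigits_append]
  · rintro ⟨n, d⟩ hp ⟨n', d'⟩ hp' h
    have hlt {m e : ℕ} (hm : (m, e) ∈ kempnerBlock b E l ×ˢ (range b \ E)) : m < b ^ l :=
      mem_range.1 (mem_filter.1 (mem_product.1 hm).1).1
    obtain rfl : n = n' := by
      simpa [Nat.mod_eq_of_lt (hlt hp), Nat.mod_eq_of_lt (hlt hp')] using congrArg (· % b ^ l) h
    have hbl : 0 < b ^ l := by positivity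
    exact congrArg _ (Nat.eq_of_mul_eq_mul_left hbl (Nat.add_left_cancel h))
  · intro m hm
    obtain ⟨X, hlen, hadm, rfl⟩ := (mem_kempnerBlock_iff_ofDigits hb hE).1 hm
    obtain ⟨Y, d, rfl⟩ := X.eq_nil_or_concat.resolve_left (by rintro rfl; simp at hlen)
    obtain rfl : Y.length = l := by simpa using hlen
    refine ⟨(Nat.ofDigits b Y, d), mem_product.2 ⟨?_, hadm d (by simp)⟩, by
      simp [Nat.ofDigits_append]⟩
    exact (mem_kempnerBlock_iff_ofDigits hb hE).2
      ⟨Y, rfl, fun e he => hadm e (by simp [he]), rfl⟩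

lemma card_kempnerBlock (hb : 1 < b) (hE : 0 ∈ E) (l : ℕ) :
    #(kempnerBlock b E l) = #(range b \ E) ^ l := by
  induction l with
  | zero => simp [kempnerBlock_zero]
  | succ l ih => rw [card_eq_sum_ones, sum_kempnerBlock_succ hb hE]; simp [ih, pow_succ]

end Blocks

section DigammaSums

lemma hasSum_pow_sub_one_div_pow {c : ℝ} (hc : 1 ≤ c) (k : ℕ) :
    HasSum (fun l => (c - 1) ^ l / c ^ (l + k)) (c / c ^ k) := by
  have hc0 : 0 < c := one_pos.trans_le hc
  have hratio : 1 - (c - 1) / c = c⁻¹ := by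
    field_simp
    ring
  have hgeom := hasSum_geometric_of_lt_one (div_nonneg (sub_nonneg.2 hc) hc0.le)
    ((div_lt_one hc0).2 (sub_one_lt c))
  rw [hratio, inv_inv] at hgeom
  simpa only [div_pow, div_div, ← pow_add] using hgeom.div_const (c ^ k)

/-- The sum `b^{-(l+k)} ∑ ψ(1 + n / b^{l+k})` over the numbers `n` with exactly `l` base-`b` digits,
none of them zero. For `k = 0` these sums telescope; for `k = 1` they are the terms with leading
digit `0` in Gauss's formula. -/
noncomputable def blockDigammaSum (b k l : ℕ) : ℝ :=
  (∑ n ∈ kempnerBlock b {0} l, digamma (1 + n / b ^ (l + k))) / b ^ (l + k)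

variable {b : ℕ}

lemma cast_card_kempnerBlock_singleton_zero (hb : 1 < b) (l : ℕ) :
    (#(kempnerBlock b {0} l) : ℝ) = (b - 1) ^ l := by
  have hcard : #(range b \ {0}) = b - 1 := by
    rw [sdiff_singleton_eq_erase, card_erase_of_mem (mem_range.2 (by lia)), card_range]
  rw [card_kempnerBlock hb (mem_singleton_self 0), hcard, Nat.cast_pow, Nat.cast_pred (by lia)]

lemma sum_inv_kempnerBlock_succ (hb : 1 < b) (l : ℕ) :
    ∑ n ∈ kempnerBlock b {0} (l + 1), (n : ℝ)⁻¹ =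
      blockDigammaSum b 0 (l + 1) - blockDigammaSum b 0 l +
        (b - 1) ^ l / b ^ l * Real.log b + blockDigammaSum b 1 l := by
  have hlead (n : ℕ) : ∑ d ∈ range b \ {0}, ((n + b ^ l * d : ℕ) : ℝ)⁻¹ =
      (Real.log b - digamma (1 + n / b ^ l)) / b ^ l +
        (∑ d ∈ range b, digamma (1 + (n + b ^ l * d : ℕ) / b ^ (l + 1))) / b ^ (l + 1) := by
    have hx : (-1 : ℝ) < n / b ^ l := neg_one_lt_zero.trans_le (by positivity)
    have hinv (d : ℕ) : ((n + b ^ l * d : ℕ) : ℝ)⁻¹ = (n / b ^ l + d : ℝ)⁻¹ / b ^ l := by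
      push_cast
      field_simp
    have harg (d : ℕ) : ((n + b ^ l * d : ℕ) : ℝ) / b ^ (l + 1) = (n / b ^ l + d) / b := by
      push_cast [pow_succ]
      field_simp
    simp only [hinv, harg]
    rw [← sum_div, sum_inv_add_eq_log_sub_digamma (by lia) hx, add_div, div_div, pow_succ']
  have hsplit (n : ℕ) : ∑ d ∈ range b, digamma (1 + (n + b ^ l * d : ℕ) / b ^ (l + 1)) =
      ∑ d ∈ range b \ {0}, digamma (1 + (n + b ^ l * d : ℕ) / b ^ (l + 1)) +
        digamma (1 + n / b ^ (l + 1)) := by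
    rw [sdiff_singleton_eq_erase, ← sum_erase_add _ _ (mem_range.2 (zero_lt_one.trans hb)),
      mul_zero, add_zero]
  rw [sum_kempnerBlock_succ hb (mem_singleton_self 0)]
  simp only [hlead, hsplit, blockDigammaSum, sum_kempnerBlock_succ hb (mem_singleton_self 0),
    sum_add_distrib, ← sum_div, sum_sub_distrib, sum_const, nsmul_eq_mul,
    cast_card_kempnerBlock_singleton_zero hb, add_zero]
  ring

lemma nonempty_kempnerBlock_singleton_zero (hb : 1 < b) (l : ℕ) :
    (kempnerBlock b {0} l).Nonempty := by
  have hcard : (0 : ℝ) < #(kempnerBlock b {0} l) := by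
    rw [cast_card_kempnerBlock_singleton_zero hb]
    exact pow_pos (sub_pos.2 (by exact_mod_cast hb)) l
  exact card_pos.1 (by exact_mod_cast hcard)

lemma lt_blockDigammaSum (hb : 1 < b) (k : ℕ) {l : ℕ} (hl : l ≠ 0) :
    (b - 1) ^ l / b ^ (l + k) * digamma 1 < blockDigammaSum b k l := by
  rw [blockDigammaSum, div_mul_eq_mul_div, ← cast_card_kempnerBlock_singleton_zero hb,
    ← nsmul_eq_mul, ← sum_const]
  refine div_lt_div_of_pos_right
    (sum_lt_sum_of_nonempty (nonempty_kempnerBlock_singleton_zero hb l) fun n hn => ?_)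
    (by positivity)
  have hn0 : n ≠ 0 := by
    rintro rfl
    exact hl (by simpa using ((mem_kempnerBlock hb).1 hn).1.symm)
  have hx : (0 : ℝ) < n / b ^ (l + k) := by positivity
  exact strictMonoOn_digamma (Set.mem_Ioi.2 one_pos) (Set.mem_Ioi.2 (by linarith))
    (lt_add_of_pos_right _ hx)

lemma le_blockDigammaSum (hb : 1 < b) (k l : ℕ) :
    (b - 1) ^ l / b ^ (l + k) * digamma 1 ≤ blockDigammaSum b k l := by
  rcases eq_or_ne l 0 with rfl | hl
  · simp [blockDigammaSum, kempnerBlock_zero, inv_mul_eq_div]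
  · exact (lt_blockDigammaSum hb k hl).le

lemma blockDigammaSum_lt (hb : 1 < b) (k l : ℕ) :
    blockDigammaSum b k l < (b - 1) ^ l / b ^ (l + k) * digamma (1 + 1 / b ^ k) := by
  rw [blockDigammaSum, div_mul_eq_mul_div, ← cast_card_kempnerBlock_singleton_zero hb,
    ← nsmul_eq_mul, ← sum_const]
  refine div_lt_div_of_pos_right
    (sum_lt_sum_of_nonempty (nonempty_kempnerBlock_singleton_zero hb l) fun n hn => ?_)
    (by positivity)
  have hn_lt : (n : ℝ) < b ^ l := by
    exact_mod_cast mem_range.1 (mem_filter.1 hn).1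
  have hx : (n : ℝ) / b ^ (l + k) < 1 / b ^ k := by
    rw [pow_add, ← div_div]
    gcongr
    exact (div_lt_one (by positivity)).2 hn_lt
  exact strictMonoOn_digamma (Set.mem_Ioi.2 (by positivity)) (Set.mem_Ioi.2 (by positivity))
    (by gcongr)

lemma summable_blockDigammaSum (hb : 1 < b) (k : ℕ) : Summable (blockDigammaSum b k) := by
  have hweights := (hasSum_pow_sub_one_div_pow (Nat.one_le_cast.2 hb.le) k).summable
  have hdiff : Summable fun l =>
      blockDigammaSum b k l - (b - 1) ^ l / b ^ (l + k) * digamma 1 :=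
    .of_nonneg_of_le (fun l => sub_nonneg.2 (le_blockDigammaSum hb k l))
      (fun l => sub_le_sub_right (blockDigammaSum_lt hb k l).le _)
      ((hweights.mul_right _).sub (hweights.mul_right _))
  simpa using hdiff.add (hweights.mul_right (digamma 1))

theorem kempnerSum_singleton_zero (hb : 1 < b) :
    kempnerSum b {0} = b * Real.log b - digamma 1 + ∑' l, blockDigammaSum b 1 l := by
  have hsum := (summable_blockDigammaSum hb 0).hasSum
  have hlog := (hasSum_pow_sub_one_div_pow (Nat.one_le_cast.2 hb.le) 0).mul_right (Real.log b)
  have htotal := ((((hasSum_nat_add_iff' 1).2 hsum).sub hsum).add hlog).add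
    (summable_blockDigammaSum hb 1).hasSum
  have hstart : blockDigammaSum b 0 0 = digamma 1 := by
    simp [blockDigammaSum, kempnerBlock_zero]
  refine kempnerSum_eq_of_hasSum hb ((hasSum_nat_add_iff' 1).1 ?_)
  convert htotal using 1
  · ext l
    exact sum_inv_kempnerBlock_succ hb l
  · rw [range_one, sum_singleton, kempnerBlock_zero, sum_singleton, Nat.cast_zero, _root_.inv_zero,
      sum_singleton, hstart, pow_zero, div_one]
    ring

lemma digamma_one_lt_tsum_blockDigammaSum (hb : 1 < b) :
    digamma 1 < ∑' l, blockDigammaSum b 1 l := by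
  have hweights := (hasSum_pow_sub_one_div_pow (Nat.one_le_cast.2 hb.le) 1).mul_right (digamma 1)
  rw [pow_one, div_self (by positivity), one_mul] at hweights
  exact hasSum_lt (le_blockDigammaSum hb 1) (lt_blockDigammaSum hb 1 one_ne_zero) hweights
    (summable_blockDigammaSum hb 1).hasSum

lemma tsum_blockDigammaSum_lt (hb : 1 < b) :
    ∑' l, blockDigammaSum b 1 l < digamma (1 + 1 / b) := by
  have hweights :=
    (hasSum_pow_sub_one_div_pow (Nat.one_le_cast.2 hb.le) 1).mul_right (digamma (1 + 1 / b))
  rw [pow_one, div_self (by positivity), one_mul] at hweights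
  have hlt (l : ℕ) := blockDigammaSum_lt hb 1 l
  rw [pow_one] at hlt
  exact hasSum_lt (fun l => (hlt l).le) (hlt 0) (summable_blockDigammaSum hb 1).hasSum hweights

end DigammaSums

theorem kempner_zero_digit_bounds (b : ℕ) (hb : 2 ≤ b) :
    (b : ℝ) * Real.log b < kempnerSum b {0} ∧
    kempnerSum b {0} < (b : ℝ) * Real.log b + digamma (1 + 1 / b) - digamma 1 ∧
    (b : ℝ) * Real.log b + digamma (1 + 1 / b) - digamma 1 <
      (b : ℝ) * Real.log b + zetaVal 2 / b := by
  have hb1 : 1 < b := hb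
  have hx : (0 : ℝ) < 1 / b := by positivity
  have hzeta := digamma_one_add_sub_digamma_one_lt hx
  rw [mul_one_div] at hzeta
  rw [kempnerSum_singleton_zero hb1]
  refine ⟨?_, ?_, ?_⟩
  · linarith [digamma_one_lt_tsum_blockDigammaSum hb1]
  · linarith [tsum_blockDigammaSum_lt hb1]
  · linarith
end
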